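/- arXiv:1510.02021 — 2 statements merged into one kernel-verified Lean document; each statement's English description precedes it below -/
import Mathlib

section
/- Let q be a prime power, let d be a positive divisor of q²−1 and write d = n·gcd(q+1, d). Let ξ be a primitive element of F_{q²}. Let a, b, c ∈ F_{q²} and j ∈ ℤ satisfy a·b ≠ 0, b = ξ^{(q−1)·j·(d/n)}·a^q and a·c^q = b^q·c, and assume b·u ≠ a·v. Let u, v ∈ F_{q²} and the positive integer r satisfy either (u^{q+1} = v^{q+1} and gcd(r, (q²−1)/d) = 1) or (u^{q+1} ≠ v^{q+1} and r = 1). Let φ be a polynomial over F_{q²} and define f(x) = (a·x^q + b·x + c)^r · φ((a·x^q + b·x + c)^{(q²−1)/d}) + u·x^q + v·x. Then f is a permutation polynomial of F_{q²} if and only if h(x) = x^r·[B·φ(x) + A^{1−r}·B^{q·r}·φ(x)^q + u^{q+1} − v^{q+1}]^{(q²−1)/d} permutes U_n. -/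
theorem exists_ringHom_eq_pow {F : Type*} [Field F] [Fintype F] {q : ℕ} (hq : IsPrimePow q)
    (hF : Fintype.card F = q ^ 2) :
    ∃ σ : F →+* F, (∀ x, σ x = x ^ q) ∧ ∀ x, σ (σ x) = x := by
  obtain ⟨p, k, hp, hk, rfl⟩ := hq
  have hp' : p.Prime := hp.nat_prime
  have : Fact p.Prime := ⟨hp'⟩
  have : CharP F p := charP_of_card_eq_prime_pow (f := k * 2) (by rw [hF, pow_mul])
  refine ⟨iterateFrobenius F p k, fun x => iterateFrobenius_def p k x, fun x => ?_⟩
  rw [iterateFrobenius_def, iterateFrobenius_def, ← pow_mul, ← sq, ← hF, FiniteField.pow_card]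

theorem exists_pow_add_self_eq_one {F : Type*} [Field F] [Fintype F] {q : ℕ} (hq : 1 < q)
    (hF : Fintype.card F = q ^ 2) (σ : F →+* F) (hσ : ∀ x, σ x = x ^ q)
    (hσσ : ∀ x, σ (σ x) = x) : ∃ τ : F, σ τ + τ = 1 := by
  obtain ⟨t, ht⟩ : ∃ t : F, σ t + t ≠ 0 := by
    by_contra! H
    have hdeg : (Polynomial.X ^ q + Polynomial.X : Polynomial F).natDegree = q := by
      compute_degree!
      · simp [hq.ne]
      · omega
    have h0 : (Polynomial.X ^ q + Polynomial.X : Polynomial F) ≠ 0 := by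
      intro h
      rw [h] at hdeg
      simp at hdeg
      omega
    refine h0 (Polynomial.eq_zero_of_natDegree_lt_card_of_eval_eq_zero _ (f := id)
      Function.injective_id (fun x => ?_) ?_)
    · simpa [hσ] using H x
    · rw [hdeg, hF]
      nlinarith
  refine ⟨t / (σ t + t), ?_⟩
  rw [map_div₀, map_add, hσσ, add_comm t, ← add_div, div_self ht]

theorem exists_zpow_eq_of_orderOf {F : Type*} [Field F] [Fintype F] {ζ : Fˣ}
    (hζ : orderOf ζ = Fintype.card F - 1) (x : Fˣ) : ∃ i : ℤ, ζ ^ i = x := by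
  classical
  refine Subgroup.mem_zpowers_iff.mp ?_
  have : Subgroup.zpowers ζ = ⊤ := by
    apply Subgroup.eq_top_of_card_eq
    rw [Nat.card_zpowers, hζ, Nat.card_eq_fintype_card, Fintype.card_units]
  rw [this]
  trivial

/-- The twisted line `{y | y = ε * y ^ q}`. -/
def twistedLine {F : Type*} [Field F] (σ : F →+* F) (ε : F) : Set F := {y | y = ε * σ y}

theorem injOn_iff_bijOn_of_pow_eq {F : Type*} [Field F] [Finite F] {S U : Set F} {e r : ℕ}
    (he : 0 < e) (hr : 0 < r) (hre : Nat.gcd r e = 1) (h0 : (0 : F) ∈ S) (hU0 : (0 : F) ∉ U)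
    (hSU : ∀ y ∈ S, y ≠ 0 → y ^ e ∈ U) (hUS : ∀ z ∈ U, ∃ y ∈ S, y ≠ 0 ∧ y ^ e = z)
    (P : F → F) (hS : Set.MapsTo (fun y => y ^ r * P (y ^ e)) S S) :
    Set.InjOn (fun y => y ^ r * P (y ^ e)) S ↔ Set.BijOn (fun x => x ^ r * P x ^ e) U U := by
  have key (y : F) : (y ^ e) ^ r * P (y ^ e) ^ e = (y ^ r * P (y ^ e)) ^ e := by
    rw [mul_pow, pow_right_comm]
  have hzero : (0 : F) ^ r * P (0 ^ e) = 0 := by rw [zero_pow hr.ne', zero_mul]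
  constructor
  · intro hinj
    have hne : ∀ y ∈ S, y ≠ 0 → y ^ r * P (y ^ e) ≠ 0 := fun y hy hy0 h =>
      hy0 (hinj hy h0 (h.trans hzero.symm))
    have hmaps : Set.MapsTo (fun x => x ^ r * P x ^ e) U U := by
      intro z hz
      obtain ⟨y, hy, hy0, rfl⟩ := hUS z hz
      change _ * _ ∈ U
      rw [key]
      exact hSU _ (hS hy) (hne y hy hy0)
    refine (Set.Finite.surjOn_iff_bijOn_of_mapsTo (Set.toFinite U) hmaps).1 ?_
    intro z hz
    obtain ⟨w, hw, hw0, rfl⟩ := hUS z hz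
    obtain ⟨y, hy, rfl⟩ :=
      ((Set.Finite.injOn_iff_bijOn_of_mapsTo (Set.toFinite S) hS).1 hinj).surjOn hw
    have hy0 : y ≠ 0 := by
      rintro rfl
      exact hw0 hzero
    exact ⟨y ^ e, hSU y hy hy0, key y⟩
  · intro hbij
    have hne : ∀ y ∈ S, y ≠ 0 → y ^ r * P (y ^ e) ≠ 0 := by
      intro y hy hy0 h
      have hmem : (y ^ e) ^ r * P (y ^ e) ^ e ∈ U := hbij.mapsTo (hSU y hy hy0)
      rw [key, h, zero_pow he.ne'] at hmem
      exact hU0 hmem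
    intro y hy y' hy' h
    change y ^ r * P (y ^ e) = y' ^ r * P (y' ^ e) at h
    by_cases hy0 : y = 0
    · subst hy0
      by_contra hy'0
      exact hne y' hy' (Ne.symm hy'0) (h.symm.trans hzero)
    by_cases hy'0 : y' = 0
    · subst hy'0
      exact (hne y hy hy0 (h.trans hzero)).elim
    have hpe : y ^ e = y' ^ e := hbij.injOn (hSU y hy hy0) (hSU y' hy' hy'0) <| by
      rw [key, key, h]
    have hpr : y ^ r = y' ^ r := by
      rw [hpe] at h
      exact mul_right_cancel₀ (right_ne_zero_of_mul (hne y' hy' hy'0)) h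
    have h1 : (y / y') ^ Nat.gcd r e = 1 := pow_gcd_eq_one.2
      ⟨by rw [div_pow, hpr, div_self (pow_ne_zero _ hy'0)],
        by rw [div_pow, hpe, div_self (pow_ne_zero _ hy'0)]⟩
    rwa [hre, pow_one, div_eq_one_iff_eq hy'0] at h1

theorem add_mul_map_mem_twistedLine {F : Type*} [Field F] {σ : F →+* F}
    (hσσ : ∀ x, σ (σ x) = x) {ε : F} (hε : ε * σ ε = 1) (t : F) :
    ε * σ t + t ∈ twistedLine σ ε := by
  change _ = _
  rw [map_add, map_mul, hσσ]
  linear_combination -t * hε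

theorem exists_add_mul_map_eq {F : Type*} [Field F] {σ : F →+* F} {ε τ : F} (hτ : σ τ + τ = 1)
    {w : F} (hw : w ∈ twistedLine σ ε) : ∃ t, ε * σ t + t = w := by
  refine ⟨w * τ, ?_⟩
  have hw' : w = ε * σ w := hw
  rw [map_mul]
  linear_combination w * hτ - σ τ * hw'

/-- The additive reduction: `G ∘ g + L` is bijective on `F` iff the map it induces on the common
image of `g` and `z ↦ A * z ^ q + B * z` is injective there. -/
theorem bijective_iff_injOn_twistedLine {F : Type*} [Field F] [Finite F] {σ : F →+* F}
    (hσσ : ∀ x, σ (σ x) = x) {ε τ : F} (hε : ε * σ ε = 1) (hτ : σ τ + τ = 1)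
    {a b c u v A B D : F} (hb0 : b ≠ 0) (hb : b = ε * σ a) (hc : c ∈ twistedLine σ ε)
    (hA : A = b * u - a * v) (hB : B = a * σ u - b * σ v) (hA0 : A ≠ 0)
    (hD : D = u * σ u - v * σ v) (G : F → F) :
    Set.MapsTo (fun y => A * σ (G y) + B * G y + D * y) (twistedLine σ ε) (twistedLine σ ε) ∧
    (Function.Bijective (fun x => G (a * σ x + b * x + c) + u * σ x + v * x) ↔
      Set.InjOn (fun y => A * σ (G y) + B * G y + D * y) (twistedLine σ ε)) := by
  have ha : a = ε * σ b := by
    rw [hb, map_mul, hσσ]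
    linear_combination -a * hε
  have hAB : A = ε * σ B := by
    rw [hA, hB, map_sub, map_mul, map_mul, hσσ, hσσ]
    linear_combination u * hb - v * ha
  have hB0 : B ≠ 0 := by
    rintro rfl
    simp [hAB] at hA0
  have hDσ : σ D = D := by
    rw [hD]
    simp only [map_sub, map_mul, hσσ]
    ring
  have hadd : ∀ y ∈ twistedLine σ ε, ∀ z ∈ twistedLine σ ε, y + z ∈ twistedLine σ ε := by
    intro y (hy : y = _) z (hz : z = _)
    change _ = _
    rw [map_add]
    linear_combination hy + hz
  have hDmul : ∀ y ∈ twistedLine σ ε, D * y ∈ twistedLine σ ε := by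
    intro y (hy : y = _)
    change _ = _
    rw [map_mul, hDσ]
    linear_combination D * hy
  have hM (z : F) : A * σ z + B * z = ε * σ (B * z) + B * z := by
    rw [hAB, map_mul, mul_assoc]
  have hMmem (z : F) : A * σ z + B * z ∈ twistedLine σ ε := by
    rw [hM]
    exact add_mul_map_mem_twistedLine hσσ hε _
  have hg (x : F) : a * σ x + b * x = ε * σ (b * x) + b * x := by
    rw [map_mul, ← mul_assoc, ← ha]
  have hgmem (x : F) : a * σ x + b * x + c ∈ twistedLine σ ε := by
    rw [hg]
    exact hadd _ (add_mul_map_mem_twistedLine hσσ hε _) _ hc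
  have hneg : ∀ y ∈ twistedLine σ ε, -y ∈ twistedLine σ ε := by
    intro y (hy : y = _)
    change _ = _
    rw [map_neg]
    linear_combination -hy
  have hgsurj : ∀ y ∈ twistedLine σ ε, ∃ x, a * σ x + b * x + c = y := by
    intro y hy
    obtain ⟨t, ht⟩ := exists_add_mul_map_eq hτ (hadd _ hy _ (hneg _ hc))
    refine ⟨t / b, ?_⟩
    rw [hg, mul_div_cancel₀ _ hb0, ht]
    ring
  have hMsurj : ∀ y ∈ twistedLine σ ε, ∃ z, A * σ z + B * z = y := by
    intro y hy
    obtain ⟨t, ht⟩ := exists_add_mul_map_eq hτ hy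
    refine ⟨t / B, ?_⟩
    rw [hM, mul_div_cancel₀ _ hB0, ht]
  have hmaps : Set.MapsTo (fun y => A * σ (G y) + B * G y + D * y)
      (twistedLine σ ε) (twistedLine σ ε) :=
    fun y hy => hadd _ (hMmem _) _ (hDmul _ hy)
  have hcomm (x y : F) (hy : y = a * σ x + b * x + c) :
      A * σ (G y + u * σ x + v * x) + B * (G y + u * σ x + v * x) =
        A * σ (G y) + B * G y + D * y - D * c := by
    simp only [map_add, map_mul, hσσ]
    rw [hD, hA, hB, hy]
    ring
  refine ⟨hmaps, fun hbij => ?_, fun hinj => Finite.injective_iff_bijective.1 ?_⟩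
  · refine ((Set.Finite.surjOn_iff_bijOn_of_mapsTo (Set.toFinite _) hmaps).1 ?_).injOn
    intro w hw
    obtain ⟨z, hz⟩ := hMsurj _ (hadd _ hw _ (hneg _ (hDmul _ hc)))
    obtain ⟨x, rfl⟩ := hbij.surjective z
    refine ⟨_, hgmem x, ?_⟩
    have := hcomm x _ rfl
    simp only at hz ⊢
    linear_combination hz - this
  · intro x x' h
    simp only at h
    have h1 := hcomm x _ rfl
    have h2 := hcomm x' _ rfl
    rw [h, h2] at h1
    have hgg := hinj (hgmem x') (hgmem x) (by simpa using h1)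
    rw [hgg] at h
    refine mul_left_cancel₀ hA0 ?_
    rw [hA]
    linear_combination a * (-h) - u * hgg

theorem cast_sq_sub_one {q : ℕ} (hq : 1 < q) :
    ((q ^ 2 - 1 : ℕ) : ℤ) = ((q : ℤ) - 1) * (q + 1) := by
  rw [Nat.cast_sub (Nat.one_le_pow _ _ (by omega))]
  push_cast
  ring

theorem zpow_mem_twistedLine_iff {F : Type*} [Field F] {q : ℕ} (hq : 1 < q) {σ : F →+* F}
    (hσ : ∀ x, σ x = x ^ q) {ζ : Fˣ} (hζ : orderOf ζ = q ^ 2 - 1) (k i : ℤ) :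
    (↑(ζ ^ i) : F) ∈ twistedLine σ (↑(ζ ^ (((q : ℤ) - 1) * k)) : F) ↔ ((q : ℤ) + 1) ∣ k + i := by
  have hq1 : (q : ℤ) - 1 ≠ 0 := by omega
  change (_ : F) = _ ↔ _
  rw [hσ, ← Units.val_pow_eq_pow_val, ← Units.val_mul, Units.val_inj, ← zpow_natCast, ← zpow_mul,
    ← zpow_add, eq_comm, ← mul_inv_eq_one, ← zpow_neg, ← zpow_add, ← orderOf_dvd_iff_zpow_eq_one,
    hζ, cast_sq_sub_one hq, ← mul_dvd_mul_iff_left (b := (q : ℤ) + 1) hq1]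
  exact iff_of_eq (congrArg _ (by ring))

/-- Raising to the power `(q ^ 2 - 1) / d` maps the nonzero points of the twisted line onto the
`n`-th roots of unity. -/
theorem pow_image_twistedLine {F : Type*} [Field F] [Fintype F] {q d n e : ℕ} (hq : 1 < q)
    (hF : Fintype.card F = q ^ 2) {σ : F →+* F} (hσ : ∀ x, σ x = x ^ q)
    (hde : q ^ 2 - 1 = d * e) (hn : d = n * Nat.gcd (q + 1) d) {ζ : Fˣ}
    (hζ : orderOf ζ = q ^ 2 - 1) (j : ℤ) {ε : F}
    (hε : ε = ↑(ζ ^ (((q : ℤ) - 1) * (j * (Nat.gcd (q + 1) d : ℤ))))) :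
    (∀ y ∈ twistedLine σ ε, y ≠ 0 → y ^ e ∈ {x : F | x ^ n = 1}) ∧
      ∀ z ∈ {x : F | x ^ n = 1}, ∃ y ∈ twistedLine σ ε, y ≠ 0 ∧ y ^ e = z := by
  have hq2 : 1 < q ^ 2 := Nat.one_lt_pow (by norm_num) hq
  have hnz : n * e ≠ 0 := by
    intro h
    have : d * e = n * e * Nat.gcd (q + 1) d := by
      conv_lhs => rw [hn]
      ring
    rw [h, zero_mul] at this
    omega
  obtain ⟨hn0, he0⟩ := mul_ne_zero_iff.1 hnz
  have hgen := exists_zpow_eq_of_orderOf (hF ▸ hζ)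
  have hbez := Nat.gcd_eq_gcd_ab (q + 1) d
  obtain ⟨m, hm⟩ := Nat.gcd_dvd_left (q + 1) d
  set g := Nat.gcd (q + 1) d
  have hmZ : (q : ℤ) + 1 = g * m := by exact_mod_cast hm
  have hdZ : (d : ℤ) = n * g := by exact_mod_cast hn
  have hpow (i : ℤ) : ((↑(ζ ^ i) : F) ^ e) ^ n = 1 ↔ (g : ℤ) ∣ i := by
    rw [← Units.val_pow_eq_pow_val, ← Units.val_pow_eq_pow_val, Units.val_eq_one, ← pow_mul,
      ← zpow_natCast, ← zpow_mul, ← orderOf_dvd_iff_zpow_eq_one, hζ, hde]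
    have hen : (e : ℤ) * n ≠ 0 := by exact_mod_cast mul_ne_zero he0 hn0
    rw [← mul_dvd_mul_iff_right (a := (g : ℤ)) hen]
    push_cast
    rw [hdZ]
    exact iff_of_eq (congrArg (· ∣ i * ((e : ℤ) * n)) (by ring))
  constructor
  · intro y hy hy0
    obtain ⟨i, hi⟩ := hgen (Units.mk0 y hy0)
    obtain rfl : (↑(ζ ^ i) : F) = y := by rw [hi, Units.val_mk0]
    rw [hε, zpow_mem_twistedLine_iff hq hσ hζ] at hy
    refine (hpow i).2 ?_
    have : (g : ℤ) ∣ j * g + i := (Dvd.intro _ hmZ.symm).trans hy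
    exact (dvd_add_right (Dvd.intro_left _ rfl)).1 this
  · intro z (hz : z ^ n = 1)
    have hz0 : z ≠ 0 := by
      rintro rfl
      simp [hn0] at hz
    obtain ⟨i, hi⟩ := hgen (Units.mk0 z hz0)
    obtain rfl : (↑(ζ ^ i) : F) = z := by rw [hi, Units.val_mk0]
    have hdvd : ((g * e : ℕ) : ℤ) ∣ i := by
      rw [← Units.val_pow_eq_pow_val, Units.val_eq_one, ← zpow_natCast, ← zpow_mul,
        ← orderOf_dvd_iff_zpow_eq_one, hζ, hde] at hz
      rw [← mul_dvd_mul_iff_right (c := (n : ℤ)) (by exact_mod_cast hn0)]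
      refine (dvd_of_eq ?_).trans hz
      push_cast
      rw [hdZ]
      ring
    obtain ⟨t, rfl⟩ := hdvd
    refine ⟨↑(ζ ^ (g * t - d * (Nat.gcdB (q + 1) d * (t + j)) : ℤ)), ?_, Units.ne_zero _, ?_⟩
    · rw [hε, zpow_mem_twistedLine_iff hq hσ hζ]
      refine ⟨Nat.gcdA (q + 1) d * (t + j), ?_⟩
      push_cast at hbez
      linear_combination (t + j) * hbez
    · rw [← Units.val_pow_eq_pow_val, Units.val_inj, ← zpow_natCast, ← zpow_mul, ← mul_inv_eq_one,
        ← zpow_neg, ← zpow_add, ← orderOf_dvd_iff_zpow_eq_one, hζ, hde]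
      refine ⟨-(Nat.gcdB (q + 1) d * (t + j)), ?_⟩
      push_cast
      ring

theorem stmt_1 {F : Type*} [Field F] [Fintype F]
    (q : ℕ) (hq : IsPrimePow q) (hF : Fintype.card F = q ^ 2)
    (d n : ℕ) (hd0 : 0 < d) (hdvd : d ∣ q ^ 2 - 1)
    (hn : d = n * Nat.gcd (q + 1) d)
    (ξ : F) (hξ : orderOf ξ = q ^ 2 - 1)
    (a b c u v : F) (j : ℤ) (hab : a * b ≠ 0)
    (hb : b = ξ ^ (((q : ℤ) - 1) * j * ((d / n : ℕ) : ℤ)) * a ^ q)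
    (hac : a * c ^ q = b ^ q * c)
    (hA0 : b * u ≠ a * v)
    (r : ℕ) (hr : 0 < r)
    (huvr : (u ^ (q + 1) = v ^ (q + 1) ∧ Nat.gcd r ((q ^ 2 - 1) / d) = 1) ∨
      (u ^ (q + 1) ≠ v ^ (q + 1) ∧ r = 1))
    (φ : Polynomial F)
    (A B : F) (hA : A = b * u - a * v) (hB : B = a * u ^ q - b * v ^ q)
    (f h : F → F)
    (hf : f = fun x => (a * x ^ q + b * x + c) ^ r *
      φ.eval ((a * x ^ q + b * x + c) ^ ((q ^ 2 - 1) / d)) + u * x ^ q + v * x)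
    (hh : h = fun x => x ^ r * (B * φ.eval x +
      A * (A ^ r)⁻¹ * B ^ (q * r) * (φ.eval x) ^ q +
      u ^ (q + 1) - v ^ (q + 1)) ^ ((q ^ 2 - 1) / d)) :
    Function.Bijective f ↔
      Set.BijOn h {x : F | x ^ n = 1} {x : F | x ^ n = 1} := by
  obtain ⟨σ, hσ, hσσ⟩ := exists_ringHom_eq_pow hq hF
  have hq1 : 1 < q := hq.one_lt
  obtain ⟨τ, hτ⟩ := exists_pow_add_self_eq_one hq1 hF σ hσ hσσ
  obtain ⟨e, hde⟩ := hdvd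
  have hq2 : 1 < q ^ 2 := Nat.one_lt_pow (by norm_num) hq1
  have he : 0 < e := Nat.pos_of_ne_zero (by rintro rfl; omega)
  have hdiv : (q ^ 2 - 1) / d = e := by rw [hde, Nat.mul_div_cancel_left _ hd0]
  have hn0 : n ≠ 0 := by
    rintro rfl
    omega
  have hdn : d / n = Nat.gcd (q + 1) d := by
    conv_lhs => rw [hn]
    exact Nat.mul_div_cancel_left _ (Nat.pos_of_ne_zero hn0)
  have hξ0 : ξ ≠ 0 := by
    rintro rfl
    rw [orderOf_zero] at hξ
    omega
  obtain ⟨ζ, rfl⟩ : ∃ ζ : Fˣ, (ζ : F) = ξ := ⟨Units.mk0 ξ hξ0, rfl⟩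
  rw [orderOf_units] at hξ
  rw [hdiv] at huvr hf hh
  rw [hdn, mul_assoc, ← Units.val_zpow_eq_zpow_val] at hb
  obtain ⟨ε, hεζ⟩ : ∃ ε : F, ε = ↑(ζ ^ (((q : ℤ) - 1) * (j * (Nat.gcd (q + 1) d : ℤ)))) :=
    ⟨_, rfl⟩
  rw [← hεζ, ← hσ] at hb
  have hε : ε * σ ε = 1 := by
    rw [hσ, hεζ, ← Units.val_pow_eq_pow_val, ← Units.val_mul, Units.val_eq_one, ← zpow_natCast,
      ← zpow_mul, ← zpow_add, ← orderOf_dvd_iff_zpow_eq_one, hξ, cast_sq_sub_one hq1]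
    exact ⟨j * (Nat.gcd (q + 1) d : ℤ), by ring⟩
  obtain ⟨hSU, hUS⟩ := pow_image_twistedLine hq1 hF hσ hde hn hξ j hεζ
  have ha0 : a ≠ 0 := left_ne_zero_of_mul hab
  have hb0 : b ≠ 0 := right_ne_zero_of_mul hab
  have hab' : a = ε * σ b := by
    rw [hb, map_mul, hσσ]
    linear_combination -a * hε
  have hc : c ∈ twistedLine σ ε := by
    rw [← hσ, ← hσ] at hac
    refine mul_left_cancel₀ ((map_ne_zero σ).2 hb0) ?_
    linear_combination -hac + σ c * hab'
  have hA0' : A ≠ 0 := by rwa [hA, sub_ne_zero]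
  have hAB : A = ε * σ B := by
    rw [hA, hB, ← hσ, ← hσ, map_sub, map_mul, map_mul, hσσ, hσσ]
    linear_combination u * hb - v * hab'
  have hre : Nat.gcd r e = 1 := by
    rcases huvr with h | ⟨-, rfl⟩
    · exact h.2
    · exact Nat.gcd_one_left e
  obtain ⟨hmaps, hiff⟩ := bijective_iff_injOn_twistedLine hσσ hε hτ (A := A) (B := B)
    (D := u ^ (q + 1) - v ^ (q + 1)) hb0 hb hc hA (by rw [hB, hσ, hσ]) hA0'
    (by rw [hσ, hσ, pow_succ', pow_succ']) (fun y => y ^ r * φ.eval (y ^ e))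
  set P : F → F := fun x => B * φ.eval x + A * (A ^ r)⁻¹ * B ^ (q * r) * (φ.eval x) ^ q +
      u ^ (q + 1) - v ^ (q + 1) with hP
  have hfactor : Set.EqOn (fun y => A * σ (y ^ r * φ.eval (y ^ e)) + B * (y ^ r * φ.eval (y ^ e)) +
      (u ^ (q + 1) - v ^ (q + 1)) * y) (fun y => y ^ r * P (y ^ e)) (twistedLine σ ε) := by
    intro y (hy : y = ε * σ y)
    have hyr : y ^ r * B ^ (q * r) = A ^ r * σ y ^ r := by
      rw [pow_mul, ← hσ, ← mul_pow, ← mul_pow]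
      congr 1
      rw [hAB]
      linear_combination σ B * hy
    have hDy : (u ^ (q + 1) - v ^ (q + 1)) * y = (u ^ (q + 1) - v ^ (q + 1)) * y ^ r := by
      rcases huvr with ⟨h, -⟩ | ⟨-, rfl⟩
      · rw [h, sub_self, zero_mul, zero_mul]
      · rw [pow_one]
    have hAr : A ^ r * (A ^ r)⁻¹ = 1 := mul_inv_cancel₀ (pow_ne_zero _ hA0')
    simp only [hP]
    rw [hDy, map_mul, map_pow, hσ (φ.eval _)]
    linear_combination (-A * (A ^ r)⁻¹ * (φ.eval (y ^ e)) ^ q) * hyr -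
      A * σ y ^ r * (φ.eval (y ^ e)) ^ q * hAr
  rw [hf, hh]
  simp only [← hσ] at hiff ⊢
  rw [hiff, hfactor.injOn_iff]
  simp only [hσ]
  exact injOn_iff_bijOn_of_pow_eq he hr hre (by simp [twistedLine]) (by simp [hn0]) hSU hUS P
    (hmaps.congr hfactor)
end

section
/- Let q be a prime power and d a positive integer with 3 | d, d | q²−1 and gcd(q+1, d) = d/3. Let ξ be a primitive element of F_{q²} and ω = ξ^{(q²−1)/3}. Let b, c ∈ F_{q²} and j ∈ ℤ satisfy b = ξ^{(q−1)·j·(d/3)} and c^q = b^q·c. For k ∈ {1, 2} define f(x) = (x^q + b·x + c)^{k·(q²−1)/d + 1} − b·x. Then f is a permutation polynomial of F_{q²} if and only if the pair ((ω^{k·q} + ω^k − 1)^{(q²−1)/d}, (ω^{2k·q} + ω^{2k} − 1)^{(q²−1)/d}) equals (1, 1) or (ω, ω²). -/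
section CubeRoots

variable {F : Type*} [Field F] {ω : F}

theorem eq_or_eq_or_eq_sq_of_pow_three_eq_one (hω3 : ω ^ 3 = 1) (hω1 : ω ≠ 1) {y : F}
    (hy : y ^ 3 = 1) : y = 1 ∨ y = ω ∨ y = ω ^ 2 := by
  have hsum : 1 + ω + ω ^ 2 = 0 := by
    have : (ω - 1) * (1 + ω + ω ^ 2) = 0 := by linear_combination hω3
    exact (mul_eq_zero.mp this).resolve_left (sub_ne_zero.mpr hω1)
  have : (y - 1) * ((y - ω) * (y - ω ^ 2)) = 0 := by
    linear_combination hy - hω3 + (y * ω - y ^ 2) * hsum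
  simpa [sub_eq_zero] using this

theorem mul_cubeRoots_distinct_iff (hω3 : ω ^ 3 = 1) (hω1 : ω ≠ 1) {α β : F}
    (hα : α ^ 3 = 1) (hβ : β ^ 3 = 1) :
    (1 ≠ ω * α ∧ 1 ≠ ω ^ 2 * β ∧ ω * α ≠ ω ^ 2 * β) ↔
      (α, β) = (1, 1) ∨ (α, β) = (ω, ω ^ 2) := by
  have hω0 : ω ≠ 0 := by rintro rfl; simp at hω3
  have h2 : ω ^ 2 ≠ 1 := fun h => hω1 (by linear_combination hω3 - ω * h)
  have h12 : ω ≠ ω ^ 2 := fun h => h2 (by linear_combination hω3 + ω * h)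
  have h4 : ω ^ 2 * ω ^ 2 = ω := by linear_combination ω * hω3
  have h3 : ω ^ 2 * ω = 1 := by linear_combination hω3
  have h3' : ω * ω ^ 2 = 1 := by linear_combination hω3
  have hs : ω * ω = ω ^ 2 := by ring
  rcases eq_or_eq_or_eq_sq_of_pow_three_eq_one hω3 hω1 hα with rfl | rfl | rfl <;>
  rcases eq_or_eq_or_eq_sq_of_pow_three_eq_one hω3 hω1 hβ with rfl | rfl | rfl <;>
  simp [hω1, hω1.symm, h2, h2.symm, h12, h12.symm, h4, h3, h3', hs]

/-- Multiplying each class `{u ∈ S | u ^ e = y}`, `y ^ 3 = 1`, of the line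
`S = {u | u ^ q = β * u}` by a scalar `P y` is injective iff the classes are permuted. -/
theorem injOn_mul_comp_pow_iff {q e : ℕ} (he : e ≠ 0) (hq : q ≠ 0) {β : F} {P : F → F}
    (hω3 : ω ^ 3 = 1) (hω1 : ω ≠ 1) (hP1 : P 1 = 1)
    (hPq : ∀ y, y ^ 3 = 1 → P y ^ q = P y)
    (hfix : ∀ a : F, a ^ q = a → a ≠ 0 → (a ^ e) ^ 3 = 1)
    (hline : ∀ u : F, u ^ q = β * u → u ≠ 0 → (u ^ e) ^ 3 = 1)
    (hcov : ∀ y : F, y ^ 3 = 1 → ∃ u : F, u ^ q = β * u ∧ u ≠ 0 ∧ u ^ e = y) :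
    Set.InjOn (fun u => u * P (u ^ e)) {u | u ^ q = β * u} ↔
      (P ω ^ e, P (ω ^ 2) ^ e) = (1, 1) ∨ (P ω ^ e, P (ω ^ 2) ^ e) = (ω, ω ^ 2) := by
  have hω6 : (ω ^ 2) ^ 3 = 1 := by rw [← pow_mul, mul_comm, pow_mul, hω3, one_pow]
  have hω0 : ω ≠ 0 := by rintro rfl; simp at hω3
  have hω2 : ω ≠ ω ^ 2 := fun h => hω1 (mul_left_cancel₀ hω0 (by linear_combination -h))
  have hω21 : 1 ≠ ω ^ 2 := fun h => hω1 (by linear_combination hω3 + ω * h)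
  constructor
  · intro hinj
    have hP0 : ∀ y, y ^ 3 = 1 → P y ≠ 0 := by
      intro y hy h0
      obtain ⟨u, hu, hu0, rfl⟩ := hcov y hy
      exact hu0 (hinj hu (by simp [hq]) (by simp [h0]))
    have hne : ∀ y z, y ^ 3 = 1 → z ^ 3 = 1 → y ≠ z → y * P y ^ e ≠ z * P z ^ e := by
      intro y z hy hz hyz h
      obtain ⟨u, hu, hu0, rfl⟩ := hcov y hy
      have hzP := hP0 z hz
      have hv : (u * P (u ^ e) / P z) ^ e = z := by
        rw [div_pow, mul_pow, h]
        field_simp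
      have huv : u = u * P (u ^ e) / P z := by
        refine hinj hu ?_ ?_
        · change (u * P (u ^ e) / P z) ^ q = _
          rw [div_pow, mul_pow, hPq _ hy, hPq _ hz, show u ^ q = β * u from hu]
          ring
        · change _ = u * P (u ^ e) / P z * P ((u * P (u ^ e) / P z) ^ e)
          rw [hv]
          field_simp
      rw [← huv] at hv
      exact hyz hv
    refine (mul_cubeRoots_distinct_iff hω3 hω1 (hfix _ (hPq _ hω3) (hP0 _ hω3))
      (hfix _ (hPq _ hω6) (hP0 _ hω6))).mp ⟨?_, ?_, hne _ _ hω3 hω6 hω2⟩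
    · simpa [hP1] using hne 1 ω (one_pow 3) hω3 hω1.symm
    · simpa [hP1] using hne 1 (ω ^ 2) (one_pow 3) hω6 hω21
  · intro h
    have h3 : (P ω ^ e) ^ 3 = 1 ∧ (P (ω ^ 2) ^ e) ^ 3 = 1 := by
      rcases h with h | h <;> obtain ⟨h, h'⟩ := Prod.ext_iff.mp h <;> simp only at h h' <;>
        simp [h, h', hω3, hω6]
    obtain ⟨n1, n2, n3⟩ := (mul_cubeRoots_distinct_iff hω3 hω1 h3.1 h3.2).mpr h
    have hP0 : ∀ y, y ^ 3 = 1 → P y ≠ 0 := by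
      intro y hy h0
      rcases eq_or_eq_or_eq_sq_of_pow_three_eq_one hω3 hω1 hy with rfl | rfl | rfl
      · simp [hP1] at h0
      · simp [h0, he] at h3
      · simp [h0, he] at h3
    have hinj : ∀ y z, y ^ 3 = 1 → z ^ 3 = 1 → y * P y ^ e = z * P z ^ e → y = z := by
      intro y z hy hz hyz
      rcases eq_or_eq_or_eq_sq_of_pow_three_eq_one hω3 hω1 hy with h1 | h1 | h1 <;>
      rcases eq_or_eq_or_eq_sq_of_pow_three_eq_one hω3 hω1 hz with h2 | h2 | h2 <;>
      rw [h1, h2] at hyz ⊢ <;> (try simp only [hP1, one_pow, mul_one] at hyz) <;>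
      first
        | rfl
        | exact absurd hyz n1
        | exact absurd hyz n2
        | exact absurd hyz n3
        | exact absurd hyz.symm n1
        | exact absurd hyz.symm n2
        | exact absurd hyz.symm n3
    intro u hu v hv huv
    simp only at huv
    by_cases hu0 : u = 0
    · by_contra hne
      have hv0 : v ≠ 0 := fun h => hne (hu0.trans h.symm)
      rw [hu0, zero_mul] at huv
      exact mul_ne_zero hv0 (hP0 _ (hline v hv hv0)) huv.symm
    by_cases hv0 : v = 0
    · rw [hv0, zero_mul] at huv
      exact absurd huv (mul_ne_zero hu0 (hP0 _ (hline u hu hu0)))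
    have hu3 := hline u hu hu0
    have key := hinj _ _ hu3 (hline v hv hv0) (by rw [← mul_pow, ← mul_pow, huv])
    rw [← key] at huv
    exact mul_right_cancel₀ (hP0 _ hu3) huv

end CubeRoots

/-- The additive case of the Akbary–Ghioca–Wang criterion for `x ↦ (x ^ q + b x + c) ^ (n + 1) - b x`. -/
theorem injective_pow_sub_mul_iff {F : Type*} [Field F] {q : ℕ}
    (hadd : ∀ x y : F, (x + y) ^ q = x ^ q + y ^ q)
    (hsub : ∀ x y : F, (x - y) ^ q = x ^ q - y ^ q)
    (hqq : ∀ x : F, (x ^ q) ^ q = x) {b c τ : F} (hb : b ^ q * b = 1) (hc : c ^ q = b ^ q * c)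
    (hτ : τ ^ q + τ = 1) (n : ℕ) :
    Function.Injective (fun x : F => (x ^ q + b * x + c) ^ (n + 1) - b * x) ↔
      Set.InjOn (fun u : F => u * ((u ^ n) ^ q + u ^ n - 1)) {u | u ^ q = b ^ q * u} := by
  have hb0 : b ≠ 0 := right_ne_zero_of_mul_eq_one hb
  have hmem : ∀ x : F, (x ^ q + b * x + c) ^ q = b ^ q * (x ^ q + b * x + c) := by
    intro x
    rw [hadd, hadd, hqq, mul_pow, hc]
    linear_combination (-x) * hb
  have hsurj : ∀ u : F, u ^ q = b ^ q * u → ∃ x : F, x ^ q + b * x + c = u := by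
    intro u hu
    refine ⟨τ * (u - c) * b ^ q, ?_⟩
    rw [mul_pow, mul_pow, hsub, hqq, hu, hc]
    linear_combination (u - c) * hτ + (u - c) * (τ ^ q + τ) * hb
  have hcomp : ∀ x u : F, x ^ q + b * x + c = u →
      b * (u ^ (n + 1) - b * x) ^ q + (u ^ (n + 1) - b * x) - c
        = u * ((u ^ n) ^ q + u ^ n - 1) := by
    intro x u hx
    have hu : u ^ q = b ^ q * u := hx ▸ hmem x
    rw [hsub, pow_succ, mul_pow, hu, mul_pow]
    linear_combination (-1 : F) * hx + ((u ^ n) ^ q * u - x ^ q) * hb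
  constructor
  · intro hinj u hu v hv huv
    obtain ⟨x, hx⟩ := hsurj u hu
    obtain ⟨y, hy⟩ := hsurj v hv
    have hxu := hcomp x u hx
    have hyv := hcomp y v hy
    simp only at huv
    set w := (u ^ (n + 1) - b * x) - (v ^ (n + 1) - b * y) with hw
    have hw0 : b * w ^ q + w = 0 := by
      rw [hw, hsub]
      linear_combination hxu - hyv + huv
    have hz : (b ^ q * w) ^ q + b * (b ^ q * w) = 0 := by
      rw [mul_pow, hqq]
      linear_combination hw0 + w * hb
    have hψ : (x + b ^ q * w) ^ q + b * (x + b ^ q * w) + c = u := by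
      rw [hadd]
      linear_combination hx + hz
    have heq : x + b ^ q * w = y := by
      apply hinj
      simp only [hψ, hy]
      linear_combination (-w) * hb + hw
    rw [heq, hy] at hψ
    exact hψ.symm
  · intro hinj x y hxy
    simp only at hxy
    have hu := hcomp x _ rfl
    have hv := hcomp y _ rfl
    have key := hinj (hmem x) (hmem y) (by simp only [← hu, ← hv, hxy])
    rw [key] at hxy
    exact mul_left_cancel₀ hb0 (sub_right_injective hxy)

theorem stmt_13 {F : Type*} [Field F] [Fintype F]
    (q : ℕ) (hq : IsPrimePow q) (hF : Fintype.card F = q ^ 2)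
    (d : ℕ) (hd3 : 3 ∣ d) (hdvd : d ∣ q ^ 2 - 1)
    (hgcd : Nat.gcd (q + 1) d = d / 3)
    (ξ : F) (hξ : orderOf ξ = q ^ 2 - 1)
    (ω : F) (hω : ω = ξ ^ ((q ^ 2 - 1) / 3))
    (b c : F) (j : ℤ)
    (hb : b = ξ ^ (((q : ℤ) - 1) * j * ((d / 3 : ℕ) : ℤ)))
    (hc : c ^ q = b ^ q * c)
    (k : ℕ) (hk : k = 1 ∨ k = 2)
    (f : F → F)
    (hf : f = fun x => (x ^ q + b * x + c) ^ (k * ((q ^ 2 - 1) / d) + 1) - b * x) :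
    Function.Bijective f ↔
      (((ω ^ (k * q) + ω ^ k - 1) ^ ((q ^ 2 - 1) / d),
        (ω ^ (2 * k * q) + ω ^ (2 * k) - 1) ^ ((q ^ 2 - 1) / d)) = ((1 : F), (1 : F)) ∨
       ((ω ^ (k * q) + ω ^ k - 1) ^ ((q ^ 2 - 1) / d),
        (ω ^ (2 * k * q) + ω ^ (2 * k) - 1) ^ ((q ^ 2 - 1) / d)) = (ω, ω ^ 2)) := by
  have hq1 : 1 < q := hq.one_lt
  have hq2 : 1 < q ^ 2 := Nat.one_lt_pow two_ne_zero hq1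
  obtain ⟨p, r, hp, -, hpr⟩ := (isPrimePow_nat_iff q).mp hq
  have : Fact p.Prime := ⟨hp⟩
  have : CharP F p := charP_of_card_eq_prime_pow (f := r * 2) (by
    rw [hF, ← hpr, pow_mul])
  have hadd : ∀ x y : F, (x + y) ^ q = x ^ q + y ^ q := by
    intro x y; rw [← hpr]; exact add_pow_char_pow x y p r
  have hsub : ∀ x y : F, (x - y) ^ q = x ^ q - y ^ q := by
    intro x y; rw [← hpr]; exact sub_pow_char_pow x y r
  have hqq : ∀ x : F, (x ^ q) ^ q = x := by
    intro x; rw [← pow_mul, ← sq, ← hF, FiniteField.pow_card]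
  obtain ⟨D, rfl⟩ := hd3
  have hD : 3 * D / 3 = D := by omega
  rw [hD] at hgcd hb
  obtain ⟨e, he⟩ := hdvd
  have hD0 : 0 < D := by rcases Nat.eq_zero_or_pos D with h | h; · simp [h] at he; omega
                         · exact h
  have he0 : e ≠ 0 := by rintro rfl; omega
  have hediv : (q ^ 2 - 1) / (3 * D) = e := by
    rw [he]; exact Nat.mul_div_cancel_left e (by omega)
  have hodiv : (q ^ 2 - 1) / 3 = D * e := by
    rw [he, mul_assoc]; exact Nat.mul_div_cancel_left _ (by omega)
  rw [hodiv] at hω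
  rw [hediv] at hf ⊢
  obtain ⟨m, hm⟩ : D ∣ q + 1 := hgcd ▸ Nat.gcd_dvd_left _ _
  have hm3 : ¬ 3 ∣ m := by
    rintro ⟨t, rfl⟩
    have : 3 * D ∣ Nat.gcd (q + 1) (3 * D) := Nat.dvd_gcd ⟨t, by rw [hm]; ring⟩ dvd_rfl
    rw [hgcd] at this
    have := Nat.le_of_dvd hD0 this
    omega
  have hZ : ((q : ℤ) - 1) * (q + 1) = 3 * D * e := by
    have : q ^ 2 = 3 * D * e + 1 := by omega
    have : (q : ℤ) ^ 2 = 3 * D * e + 1 := by exact_mod_cast this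
    linear_combination this
  have hmZ : (q : ℤ) + 1 = D * m := by exact_mod_cast hm
  have h3e : ((q : ℤ) - 1) * m = 3 * e := by
    have : (D : ℤ) ≠ 0 := by exact_mod_cast hD0.ne'
    apply mul_left_cancel₀ this
    linear_combination hZ - ((q : ℤ) - 1) * hmZ
  have h3eN : (q - 1) * m = e * 3 := by
    zify [hq1.le]; linear_combination h3e
  have hξ0 : ξ ≠ 0 := by
    rintro rfl
    rw [orderOf_zero] at hξ; omega
  have hξ1 : ξ ^ ((3 : ℤ) * D * e) = 1 := by
    rw [show (3 : ℤ) * D * e = ((q ^ 2 - 1 : ℕ) : ℤ) by rw [he]; push_cast; ring, zpow_natCast,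
      ← hξ, pow_orderOf_eq_one]
  have hξmul : ∀ t : ℤ, ξ ^ ((3 : ℤ) * D * e * t) = 1 := fun t => by
    rw [zpow_mul, hξ1, one_zpow]
  have hωz : ω = ξ ^ ((D : ℤ) * e) := by rw [hω, ← zpow_natCast]; push_cast; rfl
  have hω3 : ω ^ 3 = 1 := by
    rw [hωz, ← zpow_natCast, ← zpow_mul, ← hξ1]; congr 1; push_cast; ring
  have hω1 : ω ≠ 1 := by
    rw [hω]
    refine pow_ne_one_of_lt_orderOf (by positivity) ?_
    rw [hξ, he, mul_assoc]
    have : 0 < D * e := by positivity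
    omega
  have hbq : b ^ q * b = 1 := by
    rw [← pow_succ, hb, ← zpow_natCast, ← zpow_mul, ← hξmul (j * D)]
    congr 1; push_cast
    linear_combination j * D * hZ
  have hbm : b ^ m = 1 := by
    rw [hb, ← zpow_natCast, ← zpow_mul, ← hξmul j]
    congr 1
    linear_combination j * D * h3e
  have hpowq : ∀ {u a : F}, u ^ q = a * u → u ≠ 0 → u ^ (q - 1) = a := by
    intro u a h h0
    apply mul_right_cancel₀ h0
    rw [← h, ← pow_succ, Nat.sub_add_cancel hq1.le]
  obtain ⟨τ, hτ⟩ : ∃ τ : F, τ ^ q + τ = 1 := by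
    have hr : ξ ^ q + ξ ≠ 0 := by
      intro h
      have h1 := hpowq (a := -1) (by linear_combination h) hξ0
      have h2 : ξ ^ ((q - 1) * 2) = 1 := by rw [pow_mul, h1]; norm_num
      have h3 := Nat.le_of_dvd (by omega) (orderOf_dvd_of_pow_eq_one h2)
      rw [hξ] at h3
      have : q ^ 2 - 1 = (q - 1) * (q + 1) := by zify [hq1.le, hq2.le]; ring
      rw [this] at h3
      have := Nat.le_of_mul_le_mul_left h3 (by omega)
      omega
    refine ⟨ξ / (ξ ^ q + ξ), ?_⟩
    rw [div_pow, hadd, hqq, add_comm ξ, ← add_div, div_self hr]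
  rw [← Finite.injective_iff_bijective, hf, injective_pow_sub_mul_iff hadd hsub hqq hbq hc hτ]
  have hfun : (fun u : F => u * ((u ^ (k * e)) ^ q + u ^ (k * e) - 1))
      = fun u => u * (fun y : F => y ^ (k * q) + y ^ k - 1) (u ^ e) := by
    funext u; ring
  rw [hfun, injOn_mul_comp_pow_iff (P := fun y : F => y ^ (k * q) + y ^ k - 1) he0 (by omega) hω3 hω1]
  · simp only [← pow_mul, ← mul_assoc]
  · simp
  · intro y hy
    rw [hsub, hadd, one_pow, pow_mul y k q, hqq, add_comm]
  · intro a ha ha0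
    rw [← pow_mul, ← h3eN, pow_mul, hpowq (a := 1) (by rw [ha, one_mul]) ha0, one_pow]
  · intro u hu hu0
    rw [← pow_mul, ← h3eN, pow_mul, hpowq hu hu0, ← pow_mul, mul_comm, pow_mul, hbm, one_pow]
  · intro y hy
    obtain ⟨i, rfl⟩ : ∃ i : ℤ, y = ω ^ i := by
      rcases eq_or_eq_or_eq_sq_of_pow_three_eq_one hω3 hω1 hy with rfl | rfl | rfl
      exacts [⟨0, by simp⟩, ⟨1, by simp⟩, ⟨2, by norm_cast⟩]
    obtain ⟨s, hs⟩ : ∃ s : ℤ, (m : ℤ) * m = 3 * s + 1 := by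
      have : (m : ℤ) % 3 = 1 ∨ (m : ℤ) % 3 = 2 := by omega
      have h9 : ((m : ℤ) * m) % 3 = 1 := by
        rcases this with h | h <;> simp [Int.mul_emod, h]
      exact ⟨(m : ℤ) * m / 3, by omega⟩
    refine ⟨ξ ^ (-(j * D) + (q + 1) * m * (i + j)), ?_, zpow_ne_zero _ hξ0, ?_⟩
    · have hbq' : b ^ q = b⁻¹ := eq_inv_of_mul_eq_one_left hbq
      rw [hbq', hb, ← zpow_neg, ← zpow_add₀ hξ0, ← zpow_natCast, ← zpow_mul]
      rw [← mul_one (ξ ^ (_ + _)), ← hξmul (m * (i + j)), ← zpow_add₀ hξ0]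
      congr 1
      linear_combination (m * (i + j)) * hZ
    · rw [← zpow_natCast, ← zpow_mul, hωz, ← zpow_mul]
      rw [← mul_one (ξ ^ (_ * i)), ← hξmul (s * (i + j)), ← zpow_add₀ hξ0]
      congr 1
      linear_combination (m * (i + j) * e) * hmZ + (D * e * (i + j)) * hs
end
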